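/- For every integer n ≥ 1, the all-mountain MV assignment M^n on the 1×(n+1) strip of stamps satisfies c(M^n) = n, and likewise the all-valley assignment satisfies c(V^n) = n. -/

import Mathlib

/-- A crease direction: mountain or valley. -/
inductive MV : Type
  | M : MV
  | V : MV
deriving DecidableEq

/-- The value `σ(i)` of a layer ordering at face `i`, as a natural number
(`0` if `i` is out of range). -/
def faceVal {n : ℕ} (σ : Equiv.Perm (Fin n)) (i : ℕ) : ℕ :=
  if h : i < n then (σ ⟨i, h⟩ : Fin n) else 0

/-- Condition (1): the layer ordering respects the mountain–valley assignment. -/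
def MVRelations (n : ℕ) (μ : ℕ → MV) (σ : Equiv.Perm (Fin n)) : Prop :=
  ∀ i, i + 1 < n →
    if (μ i = MV.M ∧ Even i) ∨ (μ i = MV.V ∧ Odd i)
    then faceVal σ (i + 1) < faceVal σ i
    else faceVal σ i < faceVal σ (i + 1)

/-- `x` lies strictly between `lo` and `hi` (in either order). -/
def StrictlyBetween (x a b : ℕ) : Prop := min a b < x ∧ x < max a b

/-- Condition (2): no two creases on the same side cross. -/
def NoCrossings (n : ℕ) (σ : Equiv.Perm (Fin n)) : Prop :=
  ∀ i j, i + 1 < n → j + 1 < n → i % 2 = j % 2 →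
    ¬ Xor' (StrictlyBetween (faceVal σ j) (faceVal σ i) (faceVal σ (i + 1)))
           (StrictlyBetween (faceVal σ (j + 1)) (faceVal σ i) (faceVal σ (i + 1)))

/-- A valid layer ordering for the MV assignment `μ` on the `1 × n` strip. -/
def ValidLayerOrdering (n : ℕ) (μ : ℕ → MV) (σ : Equiv.Perm (Fin n)) : Prop :=
  MVRelations n μ σ ∧ NoCrossings n σ

/-- `c(μ)`: the number of valid layer orderings for `μ` on the `1 × n` strip. -/
noncomputable def foldCount (n : ℕ) (μ : ℕ → MV) : ℕ :=
  Nat.card {σ : Equiv.Perm (Fin n) // ValidLayerOrdering n μ σ}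

/-!
A strip all of whose creases turn the same way is a spiral: it winds outward for some steps and,
once a face lands inside the previous turn, noncrossing traps everything after it, so it winds
inward for ever. Hence an ordering is determined by its turning step `m`, which can be any of the
`n` indices `0, …, n - 1`. The classification is by induction on the number of faces: a new face
extends an inward spiral in one way, and an outward one in exactly two. The all-valley case is the
all-mountain case seen from below.
-/

open Equiv Set

theorem existsUnique_perm_lt_iff_lt {α : Type*} [LinearOrder α] {n : ℕ} {f : Fin n → α}
    (hf : Function.Injective f) : ∃! σ : Perm (Fin n), ∀ i j, σ i < σ j ↔ f i < f j := by
  have hsort : StrictMono (f ∘ Tuple.sort f) :=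
    (Tuple.monotone_sort f).strictMono_of_injective (hf.comp (Tuple.sort f).injective)
  refine ⟨(Tuple.sort f)⁻¹, fun i j => by simp [← hsort.lt_iff_lt], fun σ hσ => ?_⟩
  have hmono : StrictMono (σ * Tuple.sort f) := fun i j hij => (hσ _ _).2 (hsort hij)
  refine eq_inv_of_mul_eq_one_left (Equiv.coe_fn_injective ?_)
  exact (hmono.range_inj strictMono_id).1 (by simp [(Equiv.surjective _).range_eq])

/-- `IsSpiral N m f`: the levels `f 0, …, f (N - 1)` wind outward up to step `m` and inward
afterwards, so that `f m` and `f (m + 1)` are the two outermost levels. Going outward, the later of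
two levels is on the upper side iff its index is even; going inward, iff the index of the earlier
one is odd; and every level after `m + 1` lies on the side of `f (m + 1)` relative to those before
`m`. The parity of `min j (max i m + 1)` encodes the three cases at once. -/
def IsSpiral {α : Type*} [LT α] (N m : ℕ) (f : ℕ → α) : Prop :=
  ∀ i j, i < j → j < N → if Even (min j (max i m + 1)) then f i < f j else f j < f i

namespace IsSpiral

variable {α β : Type*} [LinearOrder α] [LinearOrder β] {N m m' k : ℕ} {f : ℕ → α} {g : ℕ → β}

theorem injOn (hf : IsSpiral N m f) : InjOn f (Iio N) := by
  intro i hi j hj hij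
  have h₁ := hf i j
  have h₂ := hf j i
  grind

theorem lt_iff_lt (hf : IsSpiral N m f) (hg : IsSpiral N m g) {i j : ℕ} (hi : i < N) (hj : j < N) :
    f i < f j ↔ g i < g j := by
  have h₁ := hf i j
  have h₂ := hf j i
  have h₃ := hg i j
  have h₄ := hg j i
  grind

theorem of_lt_iff_lt (hg : IsSpiral N m g)
    (h : ∀ i < N, ∀ j < N, (f i < f j ↔ g i < g j)) : IsSpiral N m f := by
  intro i j hij hj
  rw [h i (hij.trans hj) j hj, h j hj i (hij.trans hj)]
  exact hg i j hij hj

theorem turn_le (hf : IsSpiral N m f) (hf' : IsSpiral N m' f) (hm' : m' + 2 ≤ N) : m' ≤ m := by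
  by_contra! h
  have h₁ := hf m (m + 2) (by omega) (by omega)
  have h₂ := hf' m (m + 2) (by omega) (by omega)
  rw [show min (m + 2) (max m m + 1) = m + 1 by omega] at h₁
  rw [show min (m + 2) (max m m' + 1) = m + 2 by omega] at h₂
  grind

theorem turn_unique (hf : IsSpiral N m f) (hf' : IsSpiral N m' f) (hm : m + 2 ≤ N)
    (hm' : m' + 2 ≤ N) : m = m' :=
  le_antisymm (hf'.turn_le hf hm) (hf.turn_le hf' hm')

theorem mem_uIoo_iff (hf : IsSpiral N m f) {i k : ℕ} (hi : i + 1 < N) (hk : k < N) :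
    f k ∈ uIoo (f i) (f (i + 1)) ↔ k < i ∧ i ≤ m ∨ i + 1 < k ∧ m ≤ i := by
  have h₁ := hf i (i + 1) (by omega) hi
  have h₂ := hf k i
  have h₃ := hf k (i + 1)
  have h₄ := hf i k
  have h₅ := hf (i + 1) k
  grind [uIoo]

theorem extend (hf : IsSpiral N m f)
    (h : ∀ i < N, if Even (min N (max i m + 1)) then f i < f N else f N < f i) :
    IsSpiral (N + 1) m f := by
  intro i j hij hj
  obtain hj | rfl := Nat.lt_succ_iff_lt_or_eq.1 hj
  exacts [hf i j hij hj, h i hij]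

theorem congr_turn (hf : IsSpiral N m f) (hm : N ≤ m + 2) (hm' : N ≤ m' + 2) :
    IsSpiral N m' f := by
  intro i j hij hj
  rw [show min j (max i m' + 1) = min j (max i m + 1) by omega]
  exact hf i j hij hj

theorem extend_outward (hf : IsSpiral (m + 2) m f)
    (h : f m ∈ uIoo (f (m + 1)) (f (m + 2))) : IsSpiral (m + 3) (m + 1) f := by
  refine (hf.congr_turn le_rfl (by omega)).extend fun i hi => ?_
  rw [show min (m + 2) (max i (m + 1) + 1) = m + 2 by omega]
  have hturn := hf m (m + 1) (by omega) (by omega)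
  have hinside : i < m → f i ∈ uIoo (f m) (f (m + 1)) := fun him =>
    (hf.mem_uIoo_iff (by omega) hi).2 (by omega)
  grind [uIoo]

theorem extend_inward (hf : IsSpiral (k + 2) m f) (hm : m < k)
    (h : f (k + 2) ∈ uIoo (f k) (f (k + 1))) : IsSpiral (k + 3) m f := by
  refine hf.extend fun i hi => ?_
  rw [show min (k + 2) (max i m + 1) = max i m + 1 by omega]
  obtain hik | hki := lt_or_ge i k
  · have hk := hf i k hik (by omega)
    have hk' := hf i (k + 1) (by omega) (by omega)
    rw [show min k (max i m + 1) = max i m + 1 by omega] at hk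
    rw [show min (k + 1) (max i m + 1) = max i m + 1 by omega] at hk'
    grind [uIoo]
  · have hlast := hf k (k + 1) (by omega) (by omega)
    grind [uIoo]

theorem extend_turn (hf : IsSpiral (m + 2) m f) (h : f (m + 2) ∈ uIoo (f m) (f (m + 1)))
    (hout : ∀ i, i + 1 = m → f (m + 2) ∉ uIcc (f i) (f (i + 1))) : IsSpiral (m + 3) m f := by
  refine hf.extend fun i hi => ?_
  have hturn := hf m (m + 1) (by omega) (by omega)
  cases m with
  | zero => grind [uIoo]
  | succ k =>
    have hprev := hf k (k + 1) (by omega) (by omega)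
    have hskip := hf k (k + 2) (by omega) (by omega)
    have hbeyond : f (k + 3) ∈ uIoo (f k) (f (k + 2)) := by
      specialize hout k rfl
      grind [uIoo, uIcc]
    have hinside : i < k → f i ∈ uIoo (f k) (f (k + 1)) := fun hik =>
      (hf.mem_uIoo_iff (by omega) hi).2 (by omega)
    obtain hik | rfl | rfl | rfl : i < k ∨ i = k ∨ i = k + 1 ∨ i = k + 2 := by omega
    all_goals grind [uIoo]

end IsSpiral

section Classification

variable {α : Type*} [LinearOrder α] {N m k : ℕ} {f : ℕ → α}

/-- The conditions on the levels `f 0, …, f (N - 1)` of the faces of a strip with `N` faces, in an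
arbitrary linear order, for it to be folded flat along mountain creases only. -/
structure IsMountainFold (N : ℕ) (f : ℕ → α) : Prop where
  injOn : InjOn f (Iio N)
  zigzag : ∀ i, i + 1 < N → if Even i then f (i + 1) < f i else f i < f (i + 1)
  noncrossing : ∀ i j, i + 1 < N → j + 1 < N → i % 2 = j % 2 →
    (f j ∈ uIoo (f i) (f (i + 1)) ↔ f (j + 1) ∈ uIoo (f i) (f (i + 1)))

theorem IsMountainFold.anti {N' : ℕ} (hf : IsMountainFold N f) (h : N' ≤ N) :
    IsMountainFold N' f where
  injOn := hf.injOn.mono (Iio_subset_Iio h)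
  zigzag i hi := hf.zigzag i (hi.trans_le h)
  noncrossing i j hi hj := hf.noncrossing i j (hi.trans_le h) (hj.trans_le h)

theorem IsMountainFold.inward_or_outward (hf : IsMountainFold N f) (hk : k + 2 < N) :
    f (k + 2) ∈ uIoo (f k) (f (k + 1)) ∨ f k ∈ uIoo (f (k + 1)) (f (k + 2)) := by
  have hne : f (k + 2) ≠ f k := hf.injOn.ne hk (mem_Iio.2 (by omega)) (by omega)
  have h₁ := hf.zigzag k (by omega)
  have h₂ := hf.zigzag (k + 1) hk
  grind [uIoo]

theorem IsMountainFold.inward_of_lt (hf : IsMountainFold (k + 3) f) (hs : IsSpiral (k + 2) m f)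
    (hm : m < k) : f (k + 2) ∈ uIoo (f k) (f (k + 1)) := by
  obtain ⟨i, rfl⟩ := Nat.exists_eq_succ_of_ne_zero (Nat.ne_zero_of_lt hm)
  have h₁ : f (i + 2) ∈ uIoo (f i) (f (i + 1)) :=
    (hs.mem_uIoo_iff (by omega) (by omega)).2 (by omega)
  have h₂ : f (i + 3) ∈ uIoo (f i) (f (i + 1)) :=
    (hf.noncrossing i (i + 2) (by omega) (by omega) (by omega)).1 h₁
  refine (hf.inward_or_outward (by omega)).resolve_right fun hout => ?_
  -- `hout` puts the endpoint `f (i + 1)` strictly between two interior points of an interval.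
  grind [uIoo]

theorem IsMountainFold.notMem_uIcc_of_turn (hf : IsMountainFold (k + 4) f)
    (hs : IsSpiral (k + 3) (k + 1) f) : f (k + 3) ∉ uIcc (f k) (f (k + 1)) := by
  have h₁ : f (k + 2) ∉ uIoo (f k) (f (k + 1)) := by
    rw [hs.mem_uIoo_iff (by omega) (by omega)]
    omega
  have h₂ : f (k + 3) ∉ uIoo (f k) (f (k + 1)) :=
    mt (hf.noncrossing k (k + 2) (by omega) (by omega) (by omega)).2 h₁
  have h₃ : f (k + 3) ≠ f k := hf.injOn.ne (by simp) (by simp) (by omega)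
  have h₄ : f (k + 3) ≠ f (k + 1) := hf.injOn.ne (by simp) (by simp) (by omega)
  grind [uIoo, uIcc]

theorem IsMountainFold.exists_isSpiral_succ (hf : IsMountainFold (k + 3) f)
    (hs : IsSpiral (k + 2) m f) (hm : m ≤ k) : ∃ m', m' ≤ k + 1 ∧ IsSpiral (k + 3) m' f := by
  obtain hlt | rfl := hm.lt_or_eq
  · exact ⟨m, by omega, hs.extend_inward hlt (hf.inward_of_lt hs hlt)⟩
  · obtain hin | hout := hf.inward_or_outward (k := m) (by omega)
    · refine ⟨m, by omega, hs.extend_turn hin ?_⟩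
      rintro i rfl
      exact hf.notMem_uIcc_of_turn hs
    · exact ⟨m + 1, le_rfl, hs.extend_outward hout⟩

theorem IsMountainFold.exists_isSpiral (hf : IsMountainFold (k + 2) f) :
    ∃ m, m ≤ k ∧ IsSpiral (k + 2) m f := by
  induction k with
  | zero =>
    refine ⟨0, le_rfl, fun i j hij hj => ?_⟩
    obtain ⟨rfl, rfl⟩ : i = 0 ∧ j = 1 := by omega
    simpa using hf.zigzag 0 hj
  | succ k ih =>
    obtain ⟨m, hm, hs⟩ := ih (hf.anti (by omega))
    exact hf.exists_isSpiral_succ hs hm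

theorem IsSpiral.isMountainFold (hs : IsSpiral N m f) : IsMountainFold N f where
  injOn := hs.injOn
  zigzag i hi := by
    have h := hs i (i + 1) (by omega) hi
    rw [show min (i + 1) (max i m + 1) = i + 1 by omega] at h
    grind
  noncrossing i j hi hj hij := by
    rw [hs.mem_uIoo_iff hi (by omega), hs.mem_uIoo_iff hi hj]
    omega

theorem isMountainFold_iff_exists_isSpiral :
    IsMountainFold (k + 2) f ↔ ∃ m, m ≤ k ∧ IsSpiral (k + 2) m f :=
  ⟨IsMountainFold.exists_isSpiral, fun ⟨_, _, hs⟩ => hs.isMountainFold⟩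

end Classification

section Realization

/-- Integer levels realizing the spiral that turns at step `m`: outward it occupies
`0, -1, 2, -3, …`, and then it closes in on `N` or `-N`, according to the parity of `m`. -/
def spiralLevel (N m i : ℕ) : ℤ :=
  if i ≤ m then (if Even i then (i : ℤ) else -i)
  else (if Even m then -(N : ℤ) else N) + (if Even i then (N - i : ℤ) else i - N)

theorem isSpiral_spiralLevel (N m : ℕ) : IsSpiral N m (spiralLevel N m) := by
  intro i j hij hj
  unfold spiralLevel
  grind

@[simp]
theorem faceVal_val {n : ℕ} (σ : Perm (Fin n)) (i : Fin n) : faceVal σ i = σ i := by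
  simp [faceVal]

theorem faceVal_of_lt {n : ℕ} (σ : Perm (Fin n)) {i : ℕ} (hi : i < n) :
    faceVal σ i = σ ⟨i, hi⟩ :=
  dif_pos hi

theorem injOn_faceVal {n : ℕ} (σ : Perm (Fin n)) : InjOn (faceVal σ) (Iio n) := by
  intro i hi j hj h
  rw [faceVal_of_lt σ hi, faceVal_of_lt σ hj] at h
  exact Fin.mk.inj (σ.injective (Fin.ext h))

theorem existsUnique_perm_isSpiral (N m : ℕ) :
    ∃! σ : Perm (Fin N), IsSpiral N m (faceVal σ) := by
  have hlevel := isSpiral_spiralLevel N m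
  have hinj : Function.Injective fun i : Fin N => spiralLevel N m i :=
    fun i j h => Fin.ext (hlevel.injOn i.2 j.2 h)
  obtain ⟨σ, hσ, huniq⟩ := existsUnique_perm_lt_iff_lt hinj
  refine ⟨σ, hlevel.of_lt_iff_lt fun i hi j hj => ?_, fun τ hτ => huniq τ fun i j => ?_⟩
  · simpa only [faceVal_of_lt σ hi, faceVal_of_lt σ hj, Fin.lt_def] using hσ ⟨i, hi⟩ ⟨j, hj⟩
  · simpa using hτ.lt_iff_lt hlevel i.2 j.2

end Realization

theorem validLayerOrdering_mountain_iff {N : ℕ} (σ : Perm (Fin N)) :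
    ValidLayerOrdering N (fun _ => MV.M) σ ↔ IsMountainFold N (faceVal σ) := by
  have hrel : MVRelations N (fun _ => MV.M) σ ↔ ∀ i, i + 1 < N →
      if Even i then faceVal σ (i + 1) < faceVal σ i else faceVal σ i < faceVal σ (i + 1) := by
    simp [MVRelations]
  have hcross : NoCrossings N σ ↔ ∀ i j, i + 1 < N → j + 1 < N → i % 2 = j % 2 →
      (faceVal σ j ∈ uIoo (faceVal σ i) (faceVal σ (i + 1)) ↔
        faceVal σ (j + 1) ∈ uIoo (faceVal σ i) (faceVal σ (i + 1))) :=
    forall₅_congr fun _ _ _ _ _ => not_xor _ _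
  rw [ValidLayerOrdering, hrel, hcross]
  exact ⟨fun ⟨hzig, hnc⟩ => ⟨injOn_faceVal σ, hzig, hnc⟩, fun h => ⟨h.zigzag, h.noncrossing⟩⟩

theorem foldCount_mountain (k : ℕ) : foldCount (k + 2) (fun _ => MV.M) = k + 1 := by
  choose σ hσ huniq using existsUnique_perm_isSpiral (k + 2)
  have hvalid (τ : Perm (Fin (k + 2))) : ValidLayerOrdering (k + 2) (fun _ => MV.M) τ ↔
      ∃ m, m ≤ k ∧ IsSpiral (k + 2) m (faceVal τ) :=
    (validLayerOrdering_mountain_iff τ).trans isMountainFold_iff_exists_isSpiral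
  let ofTurn (m : Fin (k + 1)) : {τ // ValidLayerOrdering (k + 2) (fun _ => MV.M) τ} :=
    ⟨σ m, (hvalid _).2 ⟨m, m.is_le, hσ m⟩⟩
  have hinj : Function.Injective ofTurn := fun m m' h => by
    have hm' : IsSpiral (k + 2) m' (faceVal (σ m)) := by
      rw [show σ m = σ m' from congrArg Subtype.val h]
      exact hσ m'
    exact Fin.ext ((hσ m).turn_unique hm' (by omega) (by omega))
  have hsurj : Function.Surjective ofTurn := fun ⟨τ, hτ⟩ => by
    obtain ⟨m, hm, hs⟩ := (hvalid τ).1 hτ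
    exact ⟨⟨m, by omega⟩, Subtype.ext (huniq m τ hs).symm⟩
  simpa [foldCount] using (Nat.card_eq_of_bijective ofTurn ⟨hinj, hsurj⟩).symm

section Flip

/-- The crease direction seen from the other side of the paper. -/
def MV.flip : MV → MV
  | M => V
  | V => M

variable {n : ℕ} (σ : Perm (Fin n))

theorem faceVal_revPerm_mul_lt_iff {i j : ℕ} (hi : i < n) (hj : j < n) :
    faceVal (Fin.revPerm * σ) i < faceVal (Fin.revPerm * σ) j ↔ faceVal σ j < faceVal σ i := by
  simp only [faceVal_of_lt _ hi, faceVal_of_lt _ hj, Fin.val_fin_lt, Perm.mul_apply,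
    Fin.revPerm_apply, Fin.rev_lt_rev]

theorem mvRelations_flip_revPerm_mul_iff (μ : ℕ → MV) :
    MVRelations n (fun i => (μ i).flip) (Fin.revPerm * σ) ↔ MVRelations n μ σ := by
  refine forall₂_congr fun i hi => ?_
  rw [faceVal_revPerm_mul_lt_iff σ hi (by omega), faceVal_revPerm_mul_lt_iff σ (by omega) hi]
  obtain h | h := Nat.even_or_odd i <;> cases hμ : μ i <;>
    simp [hμ, MV.flip, h]

theorem strictlyBetween_revPerm_mul_iff {i j k : ℕ} (hi : i < n) (hj : j < n) (hk : k < n) :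
    StrictlyBetween (faceVal (Fin.revPerm * σ) i) (faceVal (Fin.revPerm * σ) j)
        (faceVal (Fin.revPerm * σ) k) ↔
      StrictlyBetween (faceVal σ i) (faceVal σ j) (faceVal σ k) := by
  simp only [StrictlyBetween, min_lt_iff, lt_max_iff, faceVal_revPerm_mul_lt_iff σ, hi, hj, hk]
  exact and_comm

theorem noCrossings_revPerm_mul_iff : NoCrossings n (Fin.revPerm * σ) ↔ NoCrossings n σ := by
  refine forall₅_congr fun i j hi hj _ => ?_
  rw [strictlyBetween_revPerm_mul_iff σ (by omega) (by omega) hi,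
    strictlyBetween_revPerm_mul_iff σ hj (by omega) hi]

theorem foldCount_flip (n : ℕ) (μ : ℕ → MV) :
    foldCount n (fun i => (μ i).flip) = foldCount n μ :=
  Eq.symm <| Nat.card_congr <| (Equiv.mulLeft Fin.revPerm).subtypeEquiv fun σ =>
    (and_congr (mvRelations_flip_revPerm_mul_iff σ μ) (noCrossings_revPerm_mul_iff σ)).symm

end Flip

/-- Theorem: for every `n ≥ 1`, the all-mountain assignment `M^n` and the all-valley
assignment `V^n` on the `1 × (n+1)` strip each fold in exactly `n` ways. -/
theorem stmt0 (n : ℕ) (hn : 1 ≤ n) :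
    foldCount (n + 1) (fun _ => MV.M) = n ∧ foldCount (n + 1) (fun _ => MV.V) = n := by
  obtain ⟨k, rfl⟩ := Nat.exists_eq_add_of_le' hn
  exact ⟨foldCount_mountain k,
    (foldCount_flip (k + 2) fun _ => MV.M).trans (foldCount_mountain k)⟩
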